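/- Let f : ℝ^m → ℝ be convex, let σ > 0 and λ > 0, let A ∈ ℝ^{m×n} with λ·I_m − A·Aᵀ positive semidefinite, and let x̄, b ∈ ℝ^n and z⁰ ∈ ℝ^m. Define ξ := A·x̄ − σ·A·b + σ·(λ·I_m − A·Aᵀ)·z⁰. Suppose p̄ ∈ ℝ^m minimizes y ↦ σ·λ·f(y) + (1/2)‖y − ξ‖² over ℝ^m, and set z̄ := (ξ − p̄)/(σ·λ). Then for every z ∈ ℝ^m, f*(z̄) + ( −⟨x̄, Aᵀz̄⟩ + (σ/2)‖Aᵀz̄ + b‖² + (σ/2)⟨z̄ − z⁰, (λ·I_m − A·Aᵀ)(z̄ − z⁰)⟩ ) ≤ f*(z) + ( −⟨x̄, Aᵀz⟩ + (σ/2)‖Aᵀz + b‖² + (σ/2)⟨z − z⁰, (λ·I_m − A·Aᵀ)(z − z⁰)⟩ ) as an inequality in EReal; that is, z̄ minimizes z ↦ f*(z) − ⟨x̄, Aᵀz⟩ + (σ/2)‖Aᵀz + b‖² + (σ/2)⟨z − z⁰, (λ·I_m − A·Aᵀ)(z − z⁰)⟩ over ℝ^m. -/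

import Mathlib

/-!
Since `(λ I - A Aᵀ) + A Aᵀ = λ I`, the smooth part of the objective is
`(σ λ / 2) ‖z‖² - ⟨z, ξ⟩` up to a constant (`quadratic_eq`). Optimality of `p̄` says that `z̄` is a
subgradient of `f` at `p̄` (`subgradient_of_prox`), so `f*(z̄) ≤ ⟨z̄, p̄⟩ - f(p̄)`, while
`f*(z) ≥ ⟨z, p̄⟩ - f(p̄)` for every `z`. It remains to compare the values at `z̄` and `z` of
`(σ λ / 2) ‖z‖² - ⟨z, ξ - p̄⟩`, and completing the square shows that their difference is
`(σ λ / 2) ‖z - z̄‖²`.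
-/

open Matrix

noncomputable section

/-- Euclidean norm on `Fin d → ℝ`, `‖x‖ = √⟨x,x⟩`. -/
def euclNorm {d : ℕ} (x : Fin d → ℝ) : ℝ := Real.sqrt (x ⬝ᵥ x)

/-- Fenchel conjugate of a real-valued function `g : ℝ^d → ℝ`, with values in `EReal`. -/
def fconj {d : ℕ} (g : (Fin d → ℝ) → ℝ) (v : Fin d → ℝ) : EReal :=
  ⨆ y : Fin d → ℝ, ((v ⬝ᵥ y - g y : ℝ) : EReal)

lemma euclNorm_sq {d : ℕ} (x : Fin d → ℝ) : euclNorm x ^ 2 = x ⬝ᵥ x :=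
  Real.sq_sqrt (Finset.sum_nonneg fun i _ => mul_self_nonneg (x i))

/-- Prox optimality condition: if `p` minimizes `y ↦ c f(y) + ‖y - ξ‖² / 2`, then `(ξ - p) / c` is a
subgradient of `f` at `p`. Compare `p` with `p + t (y - p)`, divide by `t` and let `t → 0⁺`. -/
lemma subgradient_of_prox {m : ℕ} {f : (Fin m → ℝ) → ℝ} (hf : ConvexOn ℝ Set.univ f)
    {c : ℝ} (hc : 0 < c) {ξ p : Fin m → ℝ}
    (hp : ∀ y : Fin m → ℝ, c * f p + 1 / 2 * euclNorm (p - ξ) ^ 2 ≤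
      c * f y + 1 / 2 * euclNorm (y - ξ) ^ 2) (y : Fin m → ℝ) :
    f p + (c⁻¹ • (ξ - p)) ⬝ᵥ (y - p) ≤ f y := by
  have key : ∀ t : ℝ, 0 < t → t ≤ 1 →
      0 ≤ c * (f y - f p) + (p - ξ) ⬝ᵥ (y - p) + t * (1 / 2 * ((y - p) ⬝ᵥ (y - p))) := by
    intro t ht ht1
    have h1 := hp ((1 - t) • p + t • y)
    have h2 := hf.2 (Set.mem_univ p) (Set.mem_univ y) (sub_nonneg.2 ht1) ht.le (by ring)
    simp only [smul_eq_mul] at h2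
    have e : (1 - t) • p + t • y - ξ = (p - ξ) + t • (y - p) := by
      ext i; simp; ring
    rw [e, euclNorm_sq, euclNorm_sq] at h1
    simp only [add_dotProduct, dotProduct_add, smul_dotProduct, dotProduct_smul,
      smul_eq_mul] at h1
    rw [dotProduct_comm (y - p) (p - ξ)] at h1
    have h3 := mul_le_mul_of_nonneg_left h2 hc.le
    refine nonneg_of_mul_nonneg_right (a := t) ?_ ht
    linarith
  have lim : 0 ≤ c * (f y - f p) + (p - ξ) ⬝ᵥ (y - p) := by
    have hcont : Filter.Tendsto (fun t : ℝ => c * (f y - f p) + (p - ξ) ⬝ᵥ (y - p) +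
        t * (1 / 2 * ((y - p) ⬝ᵥ (y - p)))) (nhdsWithin 0 (Set.Ioi 0))
        (nhds (c * (f y - f p) + (p - ξ) ⬝ᵥ (y - p))) := by
      refine (Continuous.tendsto' (by fun_prop) _ _ (by simp)).mono_left nhdsWithin_le_nhds
    refine ge_of_tendsto hcont ?_
    filter_upwards [Ioc_mem_nhdsGT (zero_lt_one' ℝ)] with t ht using key t ht.1 ht.2
  have e : (p - ξ) ⬝ᵥ (y - p) = -(c * ((c⁻¹ • (ξ - p)) ⬝ᵥ (y - p))) := by
    rw [smul_dotProduct, smul_eq_mul, mul_inv_cancel_left₀ hc.ne', ← neg_dotProduct, neg_sub]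
  rw [e] at lim
  have := nonneg_of_mul_nonneg_right (a := c) (b := f y - f p - (c⁻¹ • (ξ - p)) ⬝ᵥ (y - p))
    (by linarith) hc
  linarith

/-- With the proximal term `λ I - A Aᵀ`, the quadratic `‖Aᵀ z‖²` cancels and only the isotropic
quadratic `(σ λ / 2) ‖z‖²`, a linear term and a constant remain. -/
lemma quadratic_eq {m n : ℕ} (σ lam : ℝ) (A : Matrix (Fin m) (Fin n) ℝ)
    (xbar b : Fin n → ℝ) (z0 z : Fin m → ℝ) :
    -(xbar ⬝ᵥ (Aᵀ *ᵥ z)) + σ / 2 * euclNorm (Aᵀ *ᵥ z + b) ^ 2 +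
      σ / 2 * ((z - z0) ⬝ᵥ
        ((lam • (1 : Matrix (Fin m) (Fin m) ℝ) - A * Aᵀ) *ᵥ (z - z0))) =
    σ * lam / 2 * (z ⬝ᵥ z) -
      z ⬝ᵥ (A *ᵥ xbar - σ • (A *ᵥ b) +
        σ • ((lam • (1 : Matrix (Fin m) (Fin m) ℝ) - A * Aᵀ) *ᵥ z0)) +
      (σ / 2 * (b ⬝ᵥ b) + σ / 2 * (z0 ⬝ᵥ
        ((lam • (1 : Matrix (Fin m) (Fin m) ℝ) - A * Aᵀ) *ᵥ z0))) := by
  have adj : ∀ (u : Fin m → ℝ) (v : Fin n → ℝ), u ⬝ᵥ (A *ᵥ v) = (Aᵀ *ᵥ u) ⬝ᵥ v := by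
    intro u v
    rw [dotProduct_mulVec, mulVec_transpose]
  rw [euclNorm_sq]
  simp only [sub_mulVec, smul_mulVec, one_mulVec, ← mulVec_mulVec, mulVec_sub, dotProduct_sub,
    sub_dotProduct, dotProduct_add, add_dotProduct, dotProduct_smul, smul_eq_mul, adj]
  rw [dotProduct_comm xbar, dotProduct_comm b (Aᵀ *ᵥ z), dotProduct_comm z0 z,
    dotProduct_comm (Aᵀ *ᵥ z0) (Aᵀ *ᵥ z)]
  ring

/-- **Closed-form `z`-update of dHPR with proximal term `S_z = λ·I − A·Aᵀ`.** -/
theorem z_update_closed_form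
    (m n : ℕ) (f : (Fin m → ℝ) → ℝ) (hf : ConvexOn ℝ Set.univ f)
    (σ lam : ℝ) (hσ : 0 < σ) (hlam : 0 < lam)
    (A : Matrix (Fin m) (Fin n) ℝ)
    (hpsd : ∀ y : Fin m → ℝ,
      0 ≤ y ⬝ᵥ ((lam • (1 : Matrix (Fin m) (Fin m) ℝ) - A * Aᵀ) *ᵥ y))
    (xbar b : Fin n → ℝ) (z0 : Fin m → ℝ)
    (pbar : Fin m → ℝ)
    (hpbar : ∀ y : Fin m → ℝ,
      σ * lam * f pbar +
          1 / 2 * euclNorm (pbar -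
            (A *ᵥ xbar - σ • (A *ᵥ b) +
              σ • ((lam • (1 : Matrix (Fin m) (Fin m) ℝ) - A * Aᵀ) *ᵥ z0))) ^ 2 ≤
        σ * lam * f y +
          1 / 2 * euclNorm (y -
            (A *ᵥ xbar - σ • (A *ᵥ b) +
              σ • ((lam • (1 : Matrix (Fin m) (Fin m) ℝ) - A * Aᵀ) *ᵥ z0))) ^ 2) :
    let ξ : Fin m → ℝ := A *ᵥ xbar - σ • (A *ᵥ b) +
      σ • ((lam • (1 : Matrix (Fin m) (Fin m) ℝ) - A * Aᵀ) *ᵥ z0)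
    let zbar : Fin m → ℝ := (σ * lam)⁻¹ • (ξ - pbar)
    ∀ z : Fin m → ℝ,
      fconj f zbar +
          ((-(xbar ⬝ᵥ (Aᵀ *ᵥ zbar)) + σ / 2 * euclNorm (Aᵀ *ᵥ zbar + b) ^ 2 +
            σ / 2 * ((zbar - z0) ⬝ᵥ
              ((lam • (1 : Matrix (Fin m) (Fin m) ℝ) - A * Aᵀ) *ᵥ (zbar - z0))) : ℝ) : EReal) ≤
        fconj f z +
          ((-(xbar ⬝ᵥ (Aᵀ *ᵥ z)) + σ / 2 * euclNorm (Aᵀ *ᵥ z + b) ^ 2 +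
            σ / 2 * ((z - z0) ⬝ᵥ
              ((lam • (1 : Matrix (Fin m) (Fin m) ℝ) - A * Aᵀ) *ᵥ (z - z0))) : ℝ) : EReal) := by
  intro ξ zbar z
  have hc : 0 < σ * lam := mul_pos hσ hlam
  have hsub := subgradient_of_prox hf hc hpbar
  have hup : fconj f zbar ≤ ((zbar ⬝ᵥ pbar - f pbar : ℝ) : EReal) := by
    refine iSup_le fun y => EReal.coe_le_coe_iff.2 ?_
    have h : f pbar + zbar ⬝ᵥ (y - pbar) ≤ f y := hsub y
    rw [dotProduct_sub] at h
    linarith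
  have hlow : ((z ⬝ᵥ pbar - f pbar : ℝ) : EReal) ≤ fconj f z :=
    le_iSup (fun y : Fin m → ℝ => ((z ⬝ᵥ y - f y : ℝ) : EReal)) pbar
  refine (add_le_add_left hup _).trans (le_trans ?_ (add_le_add_left hlow _))
  rw [← EReal.coe_add, ← EReal.coe_add, EReal.coe_le_coe_iff, quadratic_eq, quadratic_eq]
  change zbar ⬝ᵥ pbar - f pbar + (σ * lam / 2 * (zbar ⬝ᵥ zbar) - zbar ⬝ᵥ ξ + _) ≤
    z ⬝ᵥ pbar - f pbar + (σ * lam / 2 * (z ⬝ᵥ z) - z ⬝ᵥ ξ + _)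
  have hξ : ξ = pbar + (σ * lam) • zbar := by
    simp only [zbar, smul_smul, mul_inv_cancel₀ hc.ne', one_smul, add_sub_cancel]
  have hsq : 0 ≤ σ * lam / 2 * ((z - zbar) ⬝ᵥ (z - zbar)) := by
    rw [← euclNorm_sq]
    positivity
  clear_value ξ zbar
  rw [hξ]
  simp only [dotProduct_sub, sub_dotProduct, dotProduct_add, dotProduct_smul, smul_eq_mul] at hsq ⊢
  rw [dotProduct_comm zbar z] at hsq
  linarith
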